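/- (Invariance of domain) Let V ⊆ ℝⁿ be open and f : V → ℝⁿ a continuous injective map. Then f is an open map: for every open U ⊆ V, the image f(U) is open in ℝⁿ. -/

import Mathlib

/-!
Brouwer's fixed point theorem comes from the volume argument of Milnor and Rogers. If `r` is `C¹`
and is the identity on the frontier of a compact set `s`, put `g = r - id`. For small `t` the map
`id + t g` permutes `s`, so `∫ x in s, det (1 + t Dg x)` is the volume of `s`; being polynomial in
`t`, this integral is the volume of `s` at `t = 1` too. If `r` maps into a sphere, its Jacobian
vanishes identically, so there is no `C¹` retraction onto a sphere.

Invariance of domain then follows Kulpa and Tao. Let `f` be injective on a closed ball `B` of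
radius `R` and centre `a`, and extend the inverse of `f : B → f(B)` to a continuous map `G`. By
Brouwer applied to `x ↦ x - Γ (f x)`, every `Γ` within `R` of `G - a` on `f(B)` has a zero in
`f(B)`. The only zero of `G - a` there is `f a`. If `f a` were not interior to `f(B)`, some `c`
near `f a` would lie outside `f(B)`; pushing a small ball off `c` onto its bounding sphere, a null
set that a generic perturbation of `G - a` maps away from `0`, would remove the zero.
-/

open Set Metric MeasureTheory Topology Module
open scoped NNReal

section Determinant

variable {E : Type*} [NormedAddCommGroup E] [NormedSpace ℝ E]

theorem det_one_add_smul_eq_sum_lagrangeBasis [FiniteDimensional ℝ E] {T : Finset ℝ}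
    (hT : finrank ℝ E < T.card) (L : E →L[ℝ] E) (t : ℝ) :
    (1 + t • L).det = ∑ a ∈ T, (Lagrange.basis T id a).eval t * (1 + a • L).det := by
  let b := finBasis ℝ E
  let A := LinearMap.toMatrix b b (L : E →ₗ[ℝ] E)
  let p : Polynomial ℝ := ((Polynomial.X : Polynomial ℝ) • A.map Polynomial.C +
    (1 : Matrix _ _ ℝ).map Polynomial.C).det
  have eval_p : ∀ t, p.eval t = (1 + t • L).det := fun t => by
    have eval_det : p.eval t = (1 + t • A).det := by
      rw [← Polynomial.coe_evalRingHom, RingHom.map_det]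
      congr 1
      ext i j
      by_cases hij : i = j <;> simp [hij] <;> ring
    rw [eval_det, ContinuousLinearMap.det, ← LinearMap.det_toMatrix b]
    congr 1
    simp [A, LinearMap.toMatrix_one]
  have degree_p : p.degree < T.card := by
    refine Polynomial.degree_le_natDegree.trans_lt (Nat.cast_lt.2 (lt_of_le_of_lt ?_ hT))
    simpa only [Fintype.card_fin] using Polynomial.natDegree_det_X_add_C_le A 1
  have interpolation := Lagrange.eq_interpolate Function.injective_id.injOn degree_p
  rw [Lagrange.interpolate_apply] at interpolation
  rw [← eval_p, interpolation, Polynomial.eval_finsetSum]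
  exact Finset.sum_congr rfl fun a _ => by
    rw [Polynomial.eval_mul, Polynomial.eval_C, id, eval_p, mul_comm]

theorem integral_det_one_add_smul_eq_of_infinite [FiniteDimensional ℝ E] {X : Type*}
    [MeasurableSpace X] {μ : Measure X} {A : X → E →L[ℝ] E} {c : ℝ}
    (hA : ∀ t : ℝ, Integrable (fun x => (1 + t • A x).det) μ)
    (hc : {t : ℝ | ∫ x, (1 + t • A x).det ∂μ = c}.Infinite) (t : ℝ) :
    ∫ x, (1 + t • A x).det ∂μ = c := by
  obtain ⟨T, hTc, hT⟩ := hc.exists_subset_card_eq (finrank ℝ E + 1)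
  have card_T : finrank ℝ E < T.card := by lia
  calc ∫ x, (1 + t • A x).det ∂μ
      = ∑ a ∈ T, (Lagrange.basis T id a).eval t * ∫ x, (1 + a • A x).det ∂μ := by
        simp only [det_one_add_smul_eq_sum_lagrangeBasis card_T _ t]
        rw [integral_finsetSum _ fun a _ => (hA a).const_mul _]
        simp only [integral_const_mul]
    _ = ∑ a ∈ T, (Lagrange.basis T id a).eval t * c :=
        Finset.sum_congr rfl fun a ha => by rw [hTc ha]
    _ = c := by
        rw [← Finset.sum_mul, ← Polynomial.eval_finsetSum,
          Lagrange.sum_basis Function.injective_id.injOn (Finset.card_pos.1 (by lia)),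
          Polynomial.eval_one, one_mul]

end Determinant

section LipschitzPerturbation

variable {E : Type*} [NormedAddCommGroup E] [NormedSpace ℝ E]

theorem bijective_add_of_lipschitzWith [CompleteSpace E] {u : E → E} {K : ℝ≥0} (hK : K < 1)
    (hu : LipschitzWith K u) : Function.Bijective fun x => x + u x := by
  have happrox : ApproximatesLinearOn (fun x => x + u x)
      (ContinuousLinearEquiv.refl ℝ E : E →L[ℝ] E) univ K := by
    rw [ApproximatesLinearOn.approximatesLinearOn_iff_lipschitzOnWith, lipschitzOnWith_univ]
    convert hu
    ext x
    simp
  have hK' : Subsingleton E ∨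
      K < ‖((ContinuousLinearEquiv.refl ℝ E).symm : E →L[ℝ] E)‖₊⁻¹ := by
    refine (subsingleton_or_nontrivial E).imp_right fun (_ : Nontrivial E) => ?_
    have hnorm : ‖((ContinuousLinearEquiv.refl ℝ E).symm : E →L[ℝ] E)‖₊ = 1 := nnnorm_one
    rwa [hnorm, inv_one]
  exact ⟨injOn_univ.1 (happrox.injOn hK'), happrox.surjective hK'⟩

theorem lipschitzWith_indicator_of_eq_zero_on_frontier [FiniteDimensional ℝ E] {F : Type*}
    [NormedAddCommGroup F] {u : E → F} {s : Set E} {K : ℝ≥0} (hs : IsClosed s)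
    (hu : LipschitzOnWith K u s) (hu₀ : ∀ x ∈ frontier s, u x = 0) :
    LipschitzWith K (s.indicator u) := by
  have crossing : ∀ x ∈ s, ∀ y ∉ s, ‖u x‖ ≤ K * dist x y := fun x hx y hy => by
    obtain ⟨z, hz, hxz⟩ := exists_mem_frontier_infDist_compl_eq_dist hx
      (ne_univ_iff_exists_notMem s |>.2 ⟨y, hy⟩)
    calc ‖u x‖ = dist (u x) (u z) := by rw [hu₀ z hz, dist_zero_right]
      _ ≤ K * dist x z := hu.dist_le_mul x hx z (hs.frontier_subset hz)
      _ ≤ K * dist x y := by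
        rw [← hxz]
        gcongr
        exact infDist_le_dist_of_mem hy
  refine LipschitzWith.of_dist_le_mul fun x y => ?_
  by_cases hx : x ∈ s <;> by_cases hy : y ∈ s
  · simpa [hx, hy] using hu.dist_le_mul x hx y hy
  · simpa [hx, hy] using crossing x hx y hy
  · simpa [hx, hy, dist_comm] using crossing y hy x hx
  · simpa [hx, hy] using mul_nonneg K.coe_nonneg dist_nonneg

theorem bijOn_add_of_lipschitzOnWith_of_eq_zero_on_frontier [FiniteDimensional ℝ E] {u : E → E}
    {s : Set E} {K : ℝ≥0} (hs : IsClosed s) (hK : K < 1) (hu : LipschitzOnWith K u s)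
    (hu₀ : ∀ x ∈ frontier s, u x = 0) : BijOn (fun x => x + u x) s s := by
  have hbij := bijective_add_of_lipschitzWith hK
    (lipschitzWith_indicator_of_eq_zero_on_frontier hs hu hu₀)
  have hcompl : BijOn (fun x => x + s.indicator u x) sᶜ sᶜ :=
    (bijOn_id sᶜ).congr fun x hx => by simp [indicator_of_notMem hx]
  have hs' := hcompl.compl hbij
  rw [compl_compl] at hs'
  exact hs'.congr fun x hx => by simp [hx]

end LipschitzPerturbation
section Volume

variable {E : Type*} [NormedAddCommGroup E] [NormedSpace ℝ E] [FiniteDimensional ℝ E]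
  [MeasurableSpace E] [BorelSpace E] (μ : Measure E) [μ.IsAddHaarMeasure]

theorem setIntegral_det_fderiv_eq_of_bijOn {h : E → E} {h' : E → E →L[ℝ] E} {s : Set E}
    (hs : MeasurableSet s)
    (hh : ∀ x ∈ s, HasFDerivWithinAt h (h' x) s x) (hbij : BijOn h s s)
    (hdet : ∀ x ∈ s, 0 ≤ (h' x).det) : ∫ x in s, (h' x).det ∂μ = μ.real s := by
  have hvol := integral_image_eq_integral_abs_det_fderiv_smul μ hs hh hbij.injOn fun _ => (1 : ℝ)
  rw [hbij.image_eq] at hvol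
  calc ∫ x in s, (h' x).det ∂μ = ∫ x in s, |(h' x).det| • (1 : ℝ) ∂μ :=
        setIntegral_congr_fun hs fun x hx => by simp [abs_of_nonneg (hdet x hx)]
    _ = μ.real s := by rw [← hvol]; simp

theorem setIntegral_det_fderiv_eq_of_eq_on_frontier {r : E → E} {s : Set E} (hs : IsCompact s)
    (hr : ContDiff ℝ 1 r) (hrs : ∀ x ∈ frontier s, r x = x) :
    ∫ x in s, (fderiv ℝ r x).det ∂μ = μ.real s := by
  let g : E → E := fun x => r x - x
  have hg : ContDiff ℝ 1 g := hr.sub contDiff_id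
  have hdet : Continuous fun p : ℝ × E => (1 + p.1 • fderiv ℝ g p.2).det :=
    ContinuousLinearMap.continuous_det.comp <| continuous_const.add <|
      continuous_fst.smul ((hg.continuous_fderiv one_ne_zero).comp continuous_snd)
  obtain ⟨C, hC⟩ := hg.locallyLipschitz.locallyLipschitzOn.exists_lipschitzOnWith_of_compact hs
  have hsmall : ∀ᶠ t : ℝ in 𝓝 0, ‖t‖₊ * C < 1 :=
    (continuous_nnnorm.mul continuous_const).tendsto' (0 : ℝ) 0 (by simp) |>.eventually_lt_const
      one_pos
  have hpos : ∀ᶠ t : ℝ in 𝓝 0, ∀ x ∈ s, 0 < (1 + t • fderiv ℝ g x).det :=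
    hs.eventually_forall_of_forall_eventually fun x _ =>
      hdet.continuousAt.eventually_const_lt (by simp [ContinuousLinearMap.det])
  have hvol : ∀ᶠ t : ℝ in 𝓝 0, ∫ x in s, (1 + t • fderiv ℝ g x).det ∂μ = μ.real s := by
    filter_upwards [hsmall, hpos] with t ht htpos
    refine setIntegral_det_fderiv_eq_of_bijOn μ hs.measurableSet (h := fun x => x + t • g x)
      (fun x _ => ((hasFDerivAt_id x).add <|
        (hg.differentiable one_ne_zero x).hasFDerivAt.const_smul t).hasFDerivWithinAt)
      (bijOn_add_of_lipschitzOnWith_of_eq_zero_on_frontier hs.isClosed ht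
        ((lipschitzWith_smul t).comp_lipschitzOnWith hC)
        fun x hx => by simp [g, hrs x hx]) fun x hx => (htpos x hx).le
  have hvol_one := integral_det_one_add_smul_eq_of_infinite
    (fun t => (hdet.comp (Continuous.prodMk_right t)).continuousOn.integrableOn_compact hs)
    (infinite_of_mem_nhds 0 hvol) 1
  have hr_eq : ∀ x, 1 + (1 : ℝ) • fderiv ℝ g x = fderiv ℝ r x := fun x => by
    have : fderiv ℝ g x = fderiv ℝ r x - 1 :=
      ((hr.differentiable one_ne_zero x).hasFDerivAt.sub (hasFDerivAt_id x)).fderiv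
    simp [this]
  simpa only [hr_eq] using hvol_one

end Volume

section Brouwer

variable {E : Type*} [NormedAddCommGroup E] [InnerProductSpace ℝ E] [FiniteDimensional ℝ E]

theorem det_fderiv_eq_zero_of_norm_eq_const {r : E → E} {x : E} {R : ℝ} (hR : R ≠ 0)
    (hd : DifferentiableAt ℝ r x) (hr : ∀ y, ‖r y‖ = R) : (fderiv ℝ r x).det = 0 := by
  by_contra hdet
  have hconst : HasFDerivAt (fun y => ‖r y‖ ^ 2) (0 : E →L[ℝ] ℝ) x := by
    simpa only [hr] using hasFDerivAt_const (R ^ 2) x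
  obtain ⟨v, hv⟩ := ((fderiv ℝ r x : E →ₗ[ℝ] E).equivOfDetNeZero hdet).surjective (r x)
  have hv' : fderiv ℝ r x v = r x := hv
  have := congrArg (· v) (hd.hasFDerivAt.norm_sq.unique hconst)
  simp [hv', hr, hR] at this

theorem not_exists_contDiff_retraction_sphere {R : ℝ} (hR : 0 < R) :
    ¬ ∃ r : E → E, ContDiff ℝ 1 r ∧ (∀ x, ‖r x‖ = R) ∧ ∀ x ∈ sphere 0 R, r x = x := by
  rintro ⟨r, hr, hrR, hrs⟩
  borelize E
  let μ : Measure E := Measure.addHaar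
  have hvol := setIntegral_det_fderiv_eq_of_eq_on_frontier μ (isCompact_closedBall (0 : E) R) hr
    fun x hx => hrs x (frontier_closedBall_subset_sphere hx)
  simp only [fun x => det_fderiv_eq_zero_of_norm_eq_const hR.ne'
    (hr.differentiable one_ne_zero x) hrR, integral_zero] at hvol
  exact (ENNReal.toReal_pos (measure_closedBall_pos μ 0 hR).ne'
    (isCompact_closedBall 0 R).measure_lt_top.ne).ne hvol

theorem exists_add_eq_zero_of_hasCompactSupport {g : E → E} (hg : Continuous g)
    (hgs : HasCompactSupport g) : ∃ x, x + g x = 0 := by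
  by_contra! hne
  obtain ⟨p, hp, hpg, hps⟩ := hg.exists_contDiff_approx 1 (ε := fun x => ‖x + g x‖) (by fun_prop)
    fun x => norm_pos_iff.2 (hne x)
  obtain ⟨R, hR, hpR⟩ : ∃ R > 0, ∀ x, R ≤ ‖x‖ → p x = 0 :=
    (hgs.mono hps).exists_pos_le_norm
  have hp_ne : ∀ x, x + p x ≠ 0 := fun x hx => (hpg x).ne <| by
    rw [eq_neg_of_add_eq_zero_right hx, dist_eq_norm, ← norm_neg]
    congr 1
    abel
  refine not_exists_contDiff_retraction_sphere hR
    ⟨fun x => (R * ‖x + p x‖⁻¹) • (x + p x), ?_, fun x => ?_, fun x hx => ?_⟩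
  · have hsum : ContDiff ℝ 1 fun x => x + p x := contDiff_id.add hp
    exact (contDiff_const.mul <| (hsum.norm ℝ hp_ne).inv fun x => norm_ne_zero_iff.2 (hp_ne x)).smul
      hsum
  · rw [norm_smul, norm_mul, norm_inv, norm_norm, Real.norm_of_nonneg hR.le,
      inv_mul_cancel_right₀ (norm_ne_zero_iff.2 (hp_ne x))]
  · rw [mem_sphere_zero_iff_norm] at hx
    simp [hpR x hx.ge, hx, hR.ne']

theorem surjective_add_of_hasCompactSupport {g : E → E} (hg : Continuous g)
    (hgs : HasCompactSupport g) : Function.Surjective fun x => x + g x := fun y => by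
  obtain ⟨x, hx⟩ := exists_add_eq_zero_of_hasCompactSupport (hg.comp (continuous_add_const y))
    (hgs.comp_homeomorph (Homeomorph.addRight y))
  refine ⟨x + y, ?_⟩
  calc x + y + g (x + y) = y + (x + g (x + y)) := by abel
    _ = y := by rw [show x + g (x + y) = 0 from hx, add_zero]

theorem exists_isFixedPt_of_mapsTo_closedBall {f : E → E} {a : E} {r : ℝ} (hr : 0 < r)
    (hf : ContinuousOn f (closedBall a r)) (hmaps : MapsTo f (closedBall a r) (closedBall a r)) :
    ∃ x ∈ closedBall a r, Function.IsFixedPt f x := by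
  have := Metric.instTietzeExtensionClosedBall ℝ a hr
  obtain ⟨F, hF, hFf⟩ := ContinuousMap.exists_forall_mem_restrict_eq isClosed_closedBall
    ⟨_, hf.domRestrict⟩ (t := closedBall a r) fun x => hmaps x.2
  let φ : ContDiffBump a := ⟨r, 2 * r, hr, by linarith⟩
  obtain ⟨x, hx⟩ := surjective_add_of_hasCompactSupport
    (g := fun x => φ x • (a - F x)) (φ.continuous.smul (by fun_prop))
    φ.hasCompactSupport.smul_right a
  have hxa : x - a = φ x • (F x - a) := by
    rw [← neg_sub a (F x), smul_neg, sub_eq_iff_eq_add, neg_add_eq_sub]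
    exact eq_sub_of_add_eq hx
  have hxr : x ∈ closedBall a r := by
    rw [mem_closedBall_iff_norm, hxa, norm_smul, Real.norm_of_nonneg φ.nonneg]
    exact (mul_le_of_le_one_left (norm_nonneg _) φ.le_one).trans (mem_closedBall_iff_norm.1 (hF x))
  rw [φ.one_of_mem_closedBall hxr, one_smul, sub_left_inj] at hxa
  have hFx : F x = f x := DFunLike.congr_fun hFf ⟨x, hxr⟩
  exact ⟨x, hxr, hFx.symm.trans hxa.symm⟩

end Brouwer

section GeneralPosition

theorem exists_notMem_forall_mem_closedBall_dist_lt {X Y : Type*} [PseudoMetricSpace X]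
    [PseudoMetricSpace Y] {G : X → Y} {A : Set X} {x₀ : X} (hG : ContinuousAt G x₀)
    (hx₀ : x₀ ∉ interior A) {η : ℝ} (hη : 0 < η) :
    ∃ c ∉ A, ∃ ε, dist x₀ c < ε ∧
      ∀ x ∈ closedBall c ε, ∀ y ∈ closedBall c ε, dist (G x) (G y) < η := by
  obtain ⟨ρ, hρ, hGρ⟩ := Metric.continuousAt_iff.1 hG (η / 2) (half_pos hη)
  obtain ⟨c, hcA, hc⟩ : ∃ c ∉ A, dist x₀ c < ρ / 2 := by
    rw [← mem_compl_iff, ← closure_compl] at hx₀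
    exact Metric.mem_closure_iff.1 hx₀ (ρ / 2) (half_pos hρ)
  have hnear : ∀ x ∈ closedBall c (ρ / 2), dist (G x) (G x₀) < η / 2 := fun x hx =>
    hGρ (by linarith [dist_triangle_right x x₀ c, mem_closedBall.1 hx])
  exact ⟨c, hcA, ρ / 2, hc, fun x hx y hy => by
    linarith [dist_triangle_right (G x) (G y) (G x₀), hnear x hx, hnear y hy]⟩

variable {E : Type*} [NormedAddCommGroup E] [NormedSpace ℝ E]

/-- The radial push of `y` away from `c`: it carries the punctured ball of radius `ε` about `c` onto
its bounding sphere and fixes everything outside that ball. At `y = c` it has the junk value `c`. -/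
noncomputable def pushOut (c : E) (ε : ℝ) (y : E) : E := c + max (ε / ‖y - c‖) 1 • (y - c)

theorem continuousOn_pushOut (c : E) (ε : ℝ) : ContinuousOn (pushOut c ε) {c}ᶜ := by
  have hdiv : ContinuousOn (fun y : E => ε / ‖y - c‖) {c}ᶜ :=
    continuousOn_const.div (by fun_prop) fun y hy => norm_ne_zero_iff.2 (sub_ne_zero.2 hy)
  exact continuousOn_const.add ((hdiv.sup continuousOn_const).smul (by fun_prop))

theorem pushOut_of_le_dist {c y : E} {ε : ℝ} (hy : ε ≤ dist y c) : pushOut c ε y = y := by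
  rw [dist_eq_norm] at hy
  rw [pushOut, max_eq_right (div_le_one_of_le₀ hy (norm_nonneg _)), one_smul, add_sub_cancel]

theorem pushOut_mem_sphere {c y : E} {ε : ℝ} (hyc : y ≠ c) (hy : dist y c ≤ ε) :
    pushOut c ε y ∈ sphere c ε := by
  have hpos : 0 < ‖y - c‖ := norm_pos_iff.2 (sub_ne_zero.2 hyc)
  rw [dist_eq_norm] at hy
  rw [mem_sphere_iff_norm, pushOut, max_eq_left ((one_le_div hpos).2 hy), add_sub_cancel_left,
    norm_smul, norm_div, norm_norm, Real.norm_of_nonneg (hpos.le.trans hy),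
    div_mul_cancel₀ _ hpos.ne']

variable [FiniteDimensional ℝ E]

theorem exists_notMem_image_norm_lt_of_addHaar_eq_zero [MeasurableSpace E] [BorelSpace E]
    (μ : Measure E) [μ.IsAddHaarMeasure] {p : E → E} {S : Set E} (hp : DifferentiableOn ℝ p S)
    (hS : μ S = 0) {η : ℝ} (hη : 0 < η) : ∃ v ∉ p '' S, ‖v‖ < η := by
  by_contra! h
  refine (measure_ball_pos μ 0 hη).ne' (measure_mono_null (fun v hv => ?_)
    (addHaar_image_eq_zero_of_differentiableOn_of_addHaar_eq_zero μ hp hS))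
  by_contra hvS
  exact (h v hvS).not_gt (mem_ball_zero_iff.1 hv)

theorem exists_continuous_norm_sub_lt_forall_ne_zero [MeasurableSpace E] [BorelSpace E]
    (μ : Measure E) [μ.IsAddHaarMeasure] {G : E → E} (hG : Continuous G) {K S : Set E}
    (hK : IsCompact K) (hGK : ∀ y ∈ K, G y ≠ 0) (hS : μ S = 0) {η : ℝ} (hη : 0 < η) :
    ∃ Γ : E → E, Continuous Γ ∧ (∀ y, ‖Γ y - G y‖ < η) ∧ ∀ y ∈ K ∪ S, Γ y ≠ 0 := by
  obtain ⟨δ, hδ, hδK⟩ := hK.exists_forall_le' hG.norm.continuousOn (a := 0)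
    fun y hy => norm_pos_iff.2 (hGK y hy)
  have hθ : 0 < min η δ / 2 := half_pos (lt_min hη hδ)
  obtain ⟨p, hp, hpG, -⟩ := hG.exists_contDiff_approx 1 continuous_const fun _ => hθ
  obtain ⟨v, hvS, hv⟩ := exists_notMem_image_norm_lt_of_addHaar_eq_zero μ
    (hp.differentiable one_ne_zero).differentiableOn hS hθ
  have hclose : ∀ y, ‖p y - v - G y‖ < min η δ := fun y => by
    calc ‖p y - v - G y‖ = ‖(p y - G y) - v‖ := by rw [sub_right_comm]
      _ ≤ ‖p y - G y‖ + ‖v‖ := norm_sub_le _ _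
      _ < min η δ / 2 + min η δ / 2 := add_lt_add (dist_eq_norm (p y) _ ▸ hpG y) hv
      _ = min η δ := add_halves _
  refine ⟨fun y => p y - v, hp.continuous.sub continuous_const,
    fun y => (hclose y).trans_le (min_le_left _ _), ?_⟩
  rintro y (hy | hy) hzero
  · refine ((hclose y).trans_le (min_le_right _ _)).not_ge ?_
    simpa [hzero] using hδK y hy
  · exact hvS ⟨y, hy, sub_eq_zero.1 hzero⟩

theorem exists_continuousOn_norm_sub_le_forall_ne_zero {G : E → E} (hG : Continuous G) {A : Set E}
    (hA : IsCompact A) {y₀ : E} (hy₀ : y₀ ∉ interior A) (hGA : ∀ y ∈ A, G y = 0 → y = y₀) {η : ℝ}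
    (hη : 0 < η) :
    ∃ Γ : E → E, ContinuousOn Γ A ∧ (∀ y ∈ A, ‖Γ y - G y‖ ≤ η) ∧ ∀ y ∈ A, Γ y ≠ 0 := by
  obtain ⟨c, hcA, ε, hc, hosc⟩ :=
    exists_notMem_forall_mem_closedBall_dist_lt hG.continuousAt hy₀ (half_pos hη)
  have hε : 0 < ε := dist_nonneg.trans_lt hc
  borelize E
  let μ : Measure E := Measure.addHaar
  obtain ⟨Γ, hΓ, hΓG, hΓ₀⟩ := exists_continuous_norm_sub_lt_forall_ne_zero μ hG
    (hA.diff isOpen_ball) (fun y hy hGy => hy.2 (hGA y hy.1 hGy ▸ hc))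
    (Measure.addHaar_sphere_of_ne_zero μ c hε.ne') (half_pos hη)
  have hAc : ∀ y ∈ A, y ≠ c := fun y hy hyc => hcA (hyc ▸ hy)
  refine ⟨Γ ∘ pushOut c ε, hΓ.comp_continuousOn ((continuousOn_pushOut c ε).mono hAc),
    fun y hy => ?_, fun y hy => ?_⟩ <;> rcases le_total ε (dist y c) with hfar | hnear
  · rw [Function.comp_apply, pushOut_of_le_dist hfar]
    linarith [hΓG y]
  · have hsphere := pushOut_mem_sphere (hAc y hy) hnear
    calc ‖Γ (pushOut c ε y) - G y‖
        ≤ ‖Γ (pushOut c ε y) - G (pushOut c ε y)‖ + dist (G (pushOut c ε y)) (G y) := by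
          rw [dist_eq_norm]; exact norm_sub_le_norm_sub_add_norm_sub _ _ _
      _ ≤ η / 2 + η / 2 :=
          add_le_add (hΓG _).le (hosc _ (sphere_subset_closedBall hsphere) y hnear).le
      _ = η := add_halves η
  · rw [Function.comp_apply, pushOut_of_le_dist hfar]
    exact hΓ₀ y (.inl ⟨hy, fun hball => hfar.not_gt hball⟩)
  · exact hΓ₀ _ (.inr (pushOut_mem_sphere (hAc y hy) hnear))

end GeneralPosition

section InvarianceOfDomain

universe u v

theorem exists_continuous_leftInvOn {X : Type u} {Y : Type v} [TopologicalSpace X]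
    [TietzeExtension.{v} X] [TopologicalSpace Y] [T4Space Y] {f : X → Y} {s : Set X}
    (hs : IsCompact s) (hf : ContinuousOn f s) (hinj : InjOn f s) :
    ∃ G : Y → X, Continuous G ∧ LeftInvOn G f s := by
  have : CompactSpace s := isCompact_iff_compactSpace.1 hs
  have hemb : IsClosedEmbedding (s.domRestrict f) :=
    (continuousOn_iff_continuous_domRestrict.1 hf).isClosedEmbedding (injOn_iff_injective.1 hinj)
  obtain ⟨G, hG⟩ :=
    ContinuousMap.exists_extension' hemb (⟨Subtype.val, continuous_subtype_val⟩ : C(s, X))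
  exact ⟨G, G.continuous, fun x hx => congrFun hG ⟨x, hx⟩⟩

section InnerProductSpace

variable {E : Type*} [NormedAddCommGroup E] [InnerProductSpace ℝ E] [FiniteDimensional ℝ E]

theorem mem_interior_image_closedBall {f : E → E} {a : E} {r : ℝ} (hr : 0 < r)
    (hf : ContinuousOn f (closedBall a r)) (hinj : InjOn f (closedBall a r)) :
    f a ∈ interior (f '' closedBall a r) := by
  by_contra hfa
  have hB : IsCompact (closedBall a r) := isCompact_closedBall a r
  obtain ⟨G, hG, hGf⟩ :=
    have := TietzeExtension.of_tvs ℝ (E := E)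
    exists_continuous_leftInvOn hB hf hinj
  obtain ⟨Γ, hΓ, hΓG, hΓ₀⟩ := exists_continuousOn_norm_sub_le_forall_ne_zero
    (hG.sub continuous_const) (hB.image_of_continuousOn hf) hfa (G := fun y => G y - a)
    (by rintro _ ⟨x, hx, rfl⟩ hzero; rw [← sub_eq_zero.1 hzero, hGf hx]) hr
  have hmaps : MapsTo (fun x => x - Γ (f x)) (closedBall a r) (closedBall a r) := fun x hx => by
    have h := hΓG (f x) (mem_image_of_mem f hx)
    rwa [hGf hx, norm_sub_rev, sub_right_comm, ← mem_closedBall_iff_norm] at h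
  obtain ⟨x, hx, hfix⟩ := exists_isFixedPt_of_mapsTo_closedBall hr
    (continuousOn_id.sub (hΓ.comp hf (mapsTo_image f _))) hmaps
  exact hΓ₀ (f x) (mem_image_of_mem f hx) (sub_eq_self.1 hfix)

theorem isOpen_image_of_continuousOn_of_injOn {f : E → E} {U : Set E} (hU : IsOpen U)
    (hf : ContinuousOn f U) (hinj : InjOn f U) : IsOpen (f '' U) := by
  rw [← subset_interior_iff_isOpen]
  rintro _ ⟨a, ha, rfl⟩
  obtain ⟨r, hr, hrU⟩ := nhds_basis_closedBall.mem_iff.1 (hU.mem_nhds ha)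
  exact interior_mono (image_mono hrU)
    (mem_interior_image_closedBall hr (hf.mono hrU) (hinj.mono hrU))

end InnerProductSpace

theorem stmt_7_general {E F : Type*}
    [AddCommGroup E] [Module ℝ E] [TopologicalSpace E] [IsTopologicalAddGroup E]
    [ContinuousSMul ℝ E] [T2Space E] [FiniteDimensional ℝ E]
    [AddCommGroup F] [Module ℝ F] [TopologicalSpace F] [IsTopologicalAddGroup F]
    [ContinuousSMul ℝ F] [T2Space F] [FiniteDimensional ℝ F]
    (hFE : finrank ℝ F ≤ finrank ℝ E) {U : Set E} (hU : IsOpen U) {f : E → F}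
    (hf : ContinuousOn f U) (hinj : InjOn f U) : IsOpen (f '' U) := by
  let e : E ≃L[ℝ] EuclideanSpace ℝ (Fin (finrank ℝ E)) := toEuclidean
  obtain ⟨i, hi⟩ := finrank_le_iff_exists_linearMap.1
    (show finrank ℝ F ≤ finrank ℝ (EuclideanSpace ℝ (Fin (finrank ℝ E))) by simpa using hFE)
  have hi_cont : Continuous i := i.continuous_of_finiteDimensional
  have hmaps : MapsTo e.symm (e '' U) U := by
    rintro _ ⟨x, hx, rfl⟩
    rwa [e.symm_apply_apply]
  have himage : (i ∘ f ∘ e.symm) '' (e '' U) = i '' (f '' U) := by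
    rw [image_comp, image_comp, e.symm_image_image]
  rw [← hi.preimage_image (f '' U), ← himage]
  exact (isOpen_image_of_continuousOn_of_injOn (e.isOpenMap U hU)
    (hi_cont.comp_continuousOn (hf.comp e.symm.continuous.continuousOn hmaps))
    (hi.comp_injOn (hinj.comp e.symm.injective.injOn hmaps))).preimage hi_cont

end InvarianceOfDomain

/-- Invariance of domain: a continuous injective map from an open subset `V` of ℝⁿ
to ℝⁿ is an open map. -/
theorem stmt_7 (n : ℕ) (V : Set (Fin n → ℝ)) (hV : IsOpen V)
    (f : (Fin n → ℝ) → (Fin n → ℝ))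
    (hf : ContinuousOn f V) (hinj : Set.InjOn f V) :
    ∀ U ⊆ V, IsOpen U → IsOpen (f '' U) :=
  fun _ hUV hU => stmt_7_general le_rfl hU (hf.mono hUV) (hinj.mono hUV)
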